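/- Let P be the R-measure. The sets {(1/6, 1/(6√3)), (2/3, 2/(3√3))} and {(5/6, 1/(6√3)), (1/3, 2/(3√3))} are each optimal sets of two-means for P, with quantization error V₂(P) = 5/54. -/

import Mathlib

open MeasureTheory ENNReal

noncomputable section

abbrev E2 : Type := EuclideanSpace ℝ (Fin 2)

/-- The point (a, b) of the Euclidean plane. -/
def pt (a b : ℝ) : E2 := (WithLp.equiv 2 (Fin 2 → ℝ)).symm ![a, b]

/-- S₁(x) = x/3. -/
def S1 : E2 → E2 := fun x => (3 : ℝ)⁻¹ • x

/-- S₂(x) = x/3 + (2/3, 0). -/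
def S2 : E2 → E2 := fun x => (3 : ℝ)⁻¹ • x + pt (2/3) 0

/-- S₃(x) = x/3 + (1/3, √3/3). -/
def S3 : E2 → E2 := fun x => (3 : ℝ)⁻¹ • x + pt (1/3) (Real.sqrt 3 / 3)

def Smap : Fin 3 → E2 → E2 := ![S1, S2, S3]

/-- For a word ω = ω₁⋯ω_k ∈ {1,2,3}^k, the composition S_ω = S_{ω₁} ∘ ⋯ ∘ S_{ω_k}. -/
def Sword {k : ℕ} (ω : Fin k → Fin 3) : E2 → E2 :=
  fun x => (List.ofFn fun i => Smap (ω i)).foldr (fun g y => g y) x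

/-- The closed triangle with vertices (0,0), (1,0), (1/2, √3/2). -/
def Tri : Set E2 := convexHull ℝ {pt 0 0, pt 1 0, pt (1/2) (Real.sqrt 3 / 2)}

/-- The distortion error ∫ min_{a ∈ α} ‖x − a‖² dμ of a set α of points. -/
def err (μ : Measure E2) (α : Set E2) : ℝ≥0∞ :=
  ∫⁻ x, ⨅ a ∈ α, ENNReal.ofReal (‖x - a‖ ^ 2) ∂μ

/-- The n-th quantization error V_n(μ). -/
def quantErr (μ : Measure E2) (n : ℕ) : ℝ≥0∞ :=
  ⨅ (α : Set E2) (_ : α.Finite ∧ α.ncard ≤ n), err μ α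

/-- α is an optimal set of n-means for μ. -/
def IsOptimal (μ : Measure E2) (n : ℕ) (α : Set E2) : Prop :=
  α.Finite ∧ α.ncard ≤ n ∧ err μ α = quantErr μ n

/-!
With `m` the midpoint of `a` and `b`,
`min (‖x - a‖²) (‖x - b‖²) = ‖x - m‖² + ‖a - b‖² / 4 - |⟪a - b, x - m⟫|`.
Hence the distortion of two points is controlled by first absolute moments `∫ |⟪v, x - c⟫ - t|` of
linear functionals about the mean `c`. The lower bound follows, by Cauchy–Schwarz and AM-GM, from
`(∫ |⟪v, x - c⟫ - t|)² ≤ t² + β ‖v‖²`, where `β ‖v‖²` is the variance of `⟪v, ·⟫` for the uniform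
distribution on the images of `c` under the maps of the system. To prove this bound, split the
integral by self-similarity: on each piece the functional is a small centered variable `Y` plus a
constant `y`, and `𝔼 |Y + y|` is at most `s y + (2 / 3) r (1 - s²)` for some `|s| ≤ 1`, where `r`
bounds `|Y|`. For the R-measure the system is a tight frame around `c`, and the resulting lower
bound is attained by the image of `c` under one map together with the mean of the other two.
-/

section

open Finset
open scoped BigOperators RealInnerProductSpace

theorem memLp_of_ae_mem_isCompact {X F : Type*} [TopologicalSpace X] [MeasurableSpace X]
    [OpensMeasurableSpace X] [NormedAddCommGroup F] [SecondCountableTopologyEither X F]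
    {μ : Measure X} [IsFiniteMeasure μ] {K : Set X} (hK : IsCompact K) (hμ : ∀ᵐ x ∂μ, x ∈ K)
    {g : X → F} (hg : Continuous g) (p : ℝ≥0∞) : MemLp g p μ := by
  obtain ⟨C, hC⟩ := hK.exists_bound_of_continuousOn hg.continuousOn
  exact .of_bound hg.aestronglyMeasurable C (hμ.mono hC)

section CenteredFunctions

variable {Ω E : Type*} [MeasurableSpace Ω] {μ : Measure Ω}

theorem integral_norm_add_sq_of_integral_eq_zero [IsProbabilityMeasure μ]
    [NormedAddCommGroup E] [InnerProductSpace ℝ E] [CompleteSpace E]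
    {Y : Ω → E} (hY : MemLp Y 2 μ) (hY0 : ∫ ω, Y ω ∂μ = 0) (w : E) :
    ∫ ω, ‖Y ω + w‖ ^ 2 ∂μ = ∫ ω, ‖Y ω‖ ^ 2 ∂μ + ‖w‖ ^ 2 := by
  have hY1 : Integrable Y μ := hY.integrable one_le_two
  have hYw : Integrable (fun ω => 2 * ⟪w, Y ω⟫) μ := (hY1.const_inner w).const_mul 2
  have hY2 : Integrable (fun ω => ‖Y ω‖ ^ 2) μ := hY.integrable_norm_pow two_ne_zero
  have hsum : Integrable (fun ω => ‖Y ω‖ ^ 2 + 2 * ⟪w, Y ω⟫) μ := hY2.add hYw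
  simp_rw [norm_add_sq_real, real_inner_comm w]
  rw [integral_add hsum (integrable_const _), integral_add hY2 hYw,
    integral_const_mul, integral_inner hY1, hY0, inner_zero_right]
  simp

theorem sq_integral_abs_le_integral_sq [IsProbabilityMeasure μ] {Y : Ω → ℝ} (hY : MemLp Y 2 μ) :
    (∫ ω, |Y ω| ∂μ) ^ 2 ≤ ∫ ω, Y ω ^ 2 ∂μ := by
  have h := ProbabilityTheory.variance_nonneg |Y| μ
  rw [ProbabilityTheory.variance_eq_sub hY.abs] at h
  simpa using h

theorem integral_abs_add_eq_of_le [IsProbabilityMeasure μ] {Y : Ω → ℝ} (hY : Integrable Y μ)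
    (hY0 : ∫ ω, Y ω ∂μ = 0) {r : ℝ} (hr : ∀ᵐ ω ∂μ, |Y ω| ≤ r) {y : ℝ} (hy : r ≤ y) :
    ∫ ω, |Y ω + y| ∂μ = y :=
  calc ∫ ω, |Y ω + y| ∂μ = ∫ ω, (Y ω + y) ∂μ :=
        integral_congr_ae <| hr.mono fun ω hω => abs_of_nonneg (by linarith [neg_le_of_abs_le hω])
    _ = y := by simp [integral_add hY (integrable_const y), hY0]

/- `y ↦ 𝔼 |Y + y|` is convex, at most `r / 2` at `0` and equal to `r` at `r`. -/
theorem integral_abs_add_mul_le [IsProbabilityMeasure μ] {Y : Ω → ℝ} (hY : Integrable Y μ)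
    (hY0 : ∫ ω, Y ω ∂μ = 0) {r : ℝ} (hr : ∀ᵐ ω ∂μ, |Y ω| ≤ r)
    (hY1 : ∫ ω, |Y ω| ∂μ ≤ r / 2) {θ : ℝ} (hθ0 : 0 ≤ θ) (hθ1 : θ ≤ 1) :
    ∫ ω, |Y ω + θ * r| ∂μ ≤ (r + θ * r) / 2 := by
  have hYr : Integrable (fun ω => Y ω + r) μ := hY.add (integrable_const r)
  calc ∫ ω, |Y ω + θ * r| ∂μ ≤ ∫ ω, ((1 - θ) * |Y ω| + θ * |Y ω + r|) ∂μ := by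
        refine integral_mono (hY.add (integrable_const _)).abs
          ((hY.abs.const_mul _).add (hYr.abs.const_mul _)) fun ω => ?_
        calc |Y ω + θ * r| = |(1 - θ) * Y ω + θ * (Y ω + r)| := by ring_nf
          _ ≤ |(1 - θ) * Y ω| + |θ * (Y ω + r)| := abs_add_le _ _
          _ = (1 - θ) * |Y ω| + θ * |Y ω + r| := by
            rw [abs_mul, abs_mul, abs_of_nonneg (sub_nonneg.2 hθ1), abs_of_nonneg hθ0]
    _ = (1 - θ) * ∫ ω, |Y ω| ∂μ + θ * r := by
        rw [integral_add (hY.abs.const_mul _) (hYr.abs.const_mul _), integral_const_mul,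
          integral_const_mul, integral_abs_add_eq_of_le hY hY0 hr le_rfl]
    _ ≤ (1 - θ) * (r / 2) + θ * r := by gcongr
    _ = (r + θ * r) / 2 := by ring

theorem integral_abs_add_le_max [IsProbabilityMeasure μ] {Y : Ω → ℝ} (hY : Integrable Y μ)
    (hY0 : ∫ ω, Y ω ∂μ = 0) {r : ℝ} (hr : ∀ᵐ ω ∂μ, |Y ω| ≤ r)
    (hY1 : ∫ ω, |Y ω| ∂μ ≤ r / 2) (y : ℝ) :
    ∫ ω, |Y ω + y| ∂μ ≤ max |y| ((r + |y|) / 2) := by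
  wlog hy : 0 ≤ y generalizing Y y
  · have h := this hY.neg (by simp [integral_neg, hY0]) (by simpa using hr) (by simpa using hY1)
      (-y) (by linarith)
    simpa only [Pi.neg_apply, ← neg_add, abs_neg] using h
  rw [abs_of_nonneg hy]
  rcases le_or_gt r y with hry | hyr
  · exact le_max_of_le_left (integral_abs_add_eq_of_le hY hY0 hr hry).le
  · have hr0 : 0 < r := hy.trans_lt hyr
    have h := integral_abs_add_mul_le hY hY0 hr hY1 (div_nonneg hy hr0.le)
      ((div_le_one hr0).2 hyr.le)
    rw [div_mul_cancel₀ y hr0.ne'] at h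
    exact le_max_of_le_right h

/- The two branches of the maximum in `integral_abs_add_le_max` are attained at `s = ±1` and
`s = ±1 / 2`; the constant `2 / 3` makes the latter exact. -/
theorem exists_integral_abs_add_le [IsProbabilityMeasure μ] {Y : Ω → ℝ} (hY : Integrable Y μ)
    (hY0 : ∫ ω, Y ω ∂μ = 0) {r : ℝ} (hr : ∀ᵐ ω ∂μ, |Y ω| ≤ r)
    (hY1 : ∫ ω, |Y ω| ∂μ ≤ r / 2) (y : ℝ) :
    ∃ s : ℝ, |s| ≤ 1 ∧ ∫ ω, |Y ω + y| ∂μ ≤ s * y + 2 / 3 * r * (1 - s ^ 2) := by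
  obtain ⟨σ, hσ, hσy⟩ : ∃ σ : ℝ, |σ| = 1 ∧ σ * y = |y| := by
    rcases le_total 0 y with hy | hy
    · exact ⟨1, abs_one, by rw [one_mul, abs_of_nonneg hy]⟩
    · exact ⟨-1, by simp, by rw [neg_one_mul, abs_of_nonpos hy]⟩
  have hσ2 : σ ^ 2 = 1 := by rw [← sq_abs, hσ, one_pow]
  rcases le_max_iff.1 (integral_abs_add_le_max hY hY0 hr hY1 y) with h | h
  · exact ⟨σ, hσ.le, h.trans_eq (by rw [hσy, hσ2]; ring)⟩
  · refine ⟨σ / 2, ?_, h.trans_eq (by rw [div_pow, hσ2, ← hσy]; ring)⟩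
    rw [abs_div, hσ, abs_two]
    norm_num

end CenteredFunctions

theorem min_norm_sub_sq {E : Type*} [NormedAddCommGroup E] [InnerProductSpace ℝ E] (x a b : E) :
    min (‖x - a‖ ^ 2) (‖x - b‖ ^ 2)
      = ‖x - midpoint ℝ a b‖ ^ 2 + ‖a - b‖ ^ 2 / 4 - |⟪a - b, x - midpoint ℝ a b⟫| := by
  set m := midpoint ℝ a b with hm
  set v := a - b with hv
  have hxa : x - a = (x - m) - (2⁻¹ : ℝ) • v := by
    rw [hm, hv, midpoint_eq_smul_add, invOf_eq_inv]; module
  have hxb : x - b = (x - m) + (2⁻¹ : ℝ) • v := by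
    rw [hm, hv, midpoint_eq_smul_add, invOf_eq_inv]; module
  have hnorm : ‖(2⁻¹ : ℝ) • v‖ ^ 2 = ‖v‖ ^ 2 / 4 := by
    rw [norm_smul, mul_pow, Real.norm_eq_abs, sq_abs]; ring
  rw [abs_eq_max_neg, ← min_sub_sub_left, hxa, hxb, norm_sub_sq_real, norm_add_sq_real, hnorm,
    real_inner_smul_right, real_inner_comm v]
  congr 1 <;> ring

section Expect

variable {ι : Type*} [Fintype ι] [Nonempty ι] {z s : ι → ℝ}

theorem expect_sub_expect_sq (s : ι → ℝ) :
    𝔼 i, (s i - 𝔼 j, s j) ^ 2 = 𝔼 i, s i ^ 2 - (𝔼 i, s i) ^ 2 := by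
  simp_rw [sub_sq, expect_add_distrib, expect_sub_distrib, Fintype.expect_const, ← expect_mul,
    ← mul_expect]
  ring

theorem sq_expect_le_expect_sq (s : ι → ℝ) : (𝔼 i, s i) ^ 2 ≤ 𝔼 i, s i ^ 2 :=
  sub_nonneg.1 <| expect_sub_expect_sq s ▸ expect_nonneg fun _ _ => sq_nonneg _

theorem expect_mul_le_sqrt_mul_sqrt (hz : 𝔼 i, z i = 0) (s : ι → ℝ) :
    𝔼 i, s i * z i ≤ √(𝔼 i, s i ^ 2 - (𝔼 i, s i) ^ 2) * √(𝔼 i, z i ^ 2) := by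
  have hcenter : 𝔼 i, s i * z i = 𝔼 i, (s i - 𝔼 j, s j) * z i := by
    simp_rw [sub_mul, expect_sub_distrib, ← mul_expect, hz, mul_zero, sub_zero]
  rw [hcenter, ← Real.sqrt_mul (sub_nonneg.2 (sq_expect_le_expect_sq s)), ← expect_sub_expect_sq]
  exact Real.le_sqrt_of_sq_le (expect_mul_sq_le_sq_mul_sq _ _ _)

/- For `q = 1` this is the Cauchy–Schwarz inequality for `(√(1 - m²), -m)` and `(b, t)`; lowering
`q` decreases `√(q - m²)` by at least `(1 - q) / 2`. -/
theorem sqrt_sub_sq_mul_sub_add_le {m q b k : ℝ} (hmq : m ^ 2 ≤ q) (hq : q ≤ 1) (hk : 0 ≤ k)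
    (hkb : 2 * k ≤ b) (t : ℝ) :
    √(q - m ^ 2) * b - m * t + k * (1 - q) ≤ √(t ^ 2 + b ^ 2) := by
  set A := √(1 - m ^ 2)
  set B := √(q - m ^ 2)
  have hA2 : A ^ 2 = 1 - m ^ 2 := Real.sq_sqrt (by linarith)
  have hB2 : B ^ 2 = q - m ^ 2 := Real.sq_sqrt (by linarith)
  have hA1 : A ≤ 1 := Real.sqrt_le_one.2 (by linarith [sq_nonneg m])
  have hBA : B ≤ A := Real.sqrt_le_sqrt (by linarith)
  have hdefect : k * (1 - q) ≤ b * (A - B) :=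
    calc k * (1 - q) = k * (A + B) * (A - B) := by linear_combination k * (hB2 - hA2)
      _ ≤ b * (A - B) := by
        refine mul_le_mul_of_nonneg_right ?_ (sub_nonneg.2 hBA)
        nlinarith only [hk, hkb, hA1, hBA]
  calc B * b - m * t + k * (1 - q) ≤ A * b - m * t := by linarith
    _ ≤ √(t ^ 2 + b ^ 2) := by
      refine Real.le_sqrt_of_sq_le ?_
      linear_combination sq_nonneg (A * t + m * b) + (b ^ 2 + t ^ 2) * hA2

theorem expect_mul_sub_add_le_sqrt (hz : 𝔼 i, z i = 0) (hs : ∀ i, |s i| ≤ 1) {k : ℝ}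
    (hk : 0 ≤ k) (hkz : (2 * k) ^ 2 ≤ 𝔼 i, z i ^ 2) (t : ℝ) :
    𝔼 i, (s i * (z i - t) + k * (1 - s i ^ 2)) ≤ √(t ^ 2 + 𝔼 i, z i ^ 2) := by
  set m := 𝔼 i, s i with hm
  set q := 𝔼 i, s i ^ 2 with hq
  have hq1 : q ≤ 1 := expect_le univ_nonempty fun i _ => (sq_le_one_iff_abs_le_one _).2 (hs i)
  calc 𝔼 i, (s i * (z i - t) + k * (1 - s i ^ 2))
      = 𝔼 i, s i * z i - m * t + k * (1 - q) := by
        simp_rw [mul_sub, expect_add_distrib, expect_sub_distrib, ← expect_mul, ← mul_expect,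
          Fintype.expect_const, ← hm, ← hq]
    _ ≤ √(q - m ^ 2) * √(𝔼 i, z i ^ 2) - m * t + k * (1 - q) := by
        gcongr
        exact expect_mul_le_sqrt_mul_sqrt hz s
    _ ≤ √(t ^ 2 + √(𝔼 i, z i ^ 2) ^ 2) :=
        sqrt_sub_sq_mul_sub_add_le (sq_expect_le_expect_sq s) hq1 hk
          (Real.le_sqrt_of_sq_le hkz) t
    _ = √(t ^ 2 + 𝔼 i, z i ^ 2) := by rw [Real.sq_sqrt (expect_nonneg fun i _ => sq_nonneg _)]

end Expect

theorem expect_inner_eq_zero_of_sum_eq_zero {ι E : Type*} [Fintype ι] [NormedAddCommGroup E]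
    [InnerProductSpace ℝ E] {w : ι → E} (hw : ∑ i, w i = 0) (v : E) : 𝔼 i, ⟪v, w i⟫ = 0 := by
  rw [Fintype.expect_eq_sum_div_card, ← inner_sum, hw, inner_zero_right, zero_div]

/-- The measure `μ` is invariant under the iterated function system `f` with equal weights, that
is, `μ` is the average of its images under the maps `f i`. -/
def IsSelfSimilar {ι X : Type*} [Fintype ι] [MeasurableSpace X] (μ : Measure X)
    (f : ι → X → X) : Prop :=
  μ = (Fintype.card ι : ℝ≥0∞)⁻¹ • ∑ i, μ.map (f i)

namespace IsSelfSimilar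

variable {ι X : Type*} [Fintype ι] [MeasurableSpace X] {μ : Measure X} {f : ι → X → X}

theorem integrable_map {F : Type*} [NormedAddCommGroup F] (h : IsSelfSimilar μ f) {g : X → F}
    (hg : Integrable g μ) (i : ι) : Integrable g (μ.map (f i)) := by
  have : Nonempty ι := ⟨i⟩
  rw [h, integrable_smul_measure (by simp) (by simp), integrable_finsetSum_measure] at hg
  exact hg i (mem_univ i)

theorem integrable_comp {F : Type*} [NormedAddCommGroup F] (h : IsSelfSimilar μ f)
    (hf : ∀ i, Measurable (f i)) {g : X → F} (hg : Integrable g μ) (i : ι) :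
    Integrable (fun x => g (f i x)) μ :=
  (h.integrable_map hg i).comp_measurable (hf i)

theorem integral_eq_expect (h : IsSelfSimilar μ f) (hf : ∀ i, Measurable (f i)) {g : X → ℝ}
    (hg : Integrable g μ) : ∫ x, g x ∂μ = 𝔼 i, ∫ x, g (f i x) ∂μ := by
  have hgi := h.integrable_map hg
  conv_lhs => rw [h]
  rw [integral_smul_measure, integral_finsetSum_measure fun i _ => hgi i,
    Fintype.expect_eq_sum_div_card, div_eq_inv_mul]
  simp [integral_map (hf _).aemeasurable (hgi _).aestronglyMeasurable]

/- If `φ = arctan (max (dist · c - R) 0)` and `ψ` is defined like `φ` with the excess distance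
scaled by `ρ`, then `φ ∘ f i ≤ ψ ≤ φ`; invariance forces `ψ = φ` almost everywhere. -/
theorem ae_dist_le [PseudoMetricSpace X] [OpensMeasurableSpace X] [Nonempty ι] [IsFiniteMeasure μ]
    (h : IsSelfSimilar μ f)
    (hf : ∀ i, Measurable (f i)) {c : X} {R ρ : ℝ} (hρ0 : 0 ≤ ρ) (hρ1 : ρ < 1)
    (hdist : ∀ i x, dist (f i x) c ≤ ρ * dist x c + (1 - ρ) * R) :
    ∀ᵐ x ∂μ, dist x c ≤ R := by
  let excess (x : X) : ℝ := max (dist x c - R) 0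
  let φ (a : ℝ) (x : X) : ℝ := Real.arctan (a * excess x)
  have hφ (a : ℝ) : Integrable (φ a) μ := by
    have hcont : Continuous (φ a) := by fun_prop
    refine .of_bound hcont.aestronglyMeasurable (Real.pi / 2) (.of_forall fun x => ?_)
    exact abs_le.2 ⟨(Real.neg_pi_div_two_lt_arctan _).le, (Real.arctan_lt_pi_div_two _).le⟩
  have hφρ : φ ρ ≤ φ 1 := fun x =>
    Real.arctan_mono <| mul_le_mul_of_nonneg_right hρ1.le (le_max_right _ _)
  have hφf (i : ι) (x : X) : φ 1 (f i x) ≤ φ ρ x := by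
    refine Real.arctan_mono ?_
    rw [one_mul, mul_max_of_nonneg _ _ hρ0, mul_zero]
    exact max_le_max_right 0 (by linarith [hdist i x])
  have hint : ∫ x, φ 1 x ∂μ ≤ ∫ x, φ ρ x ∂μ := by
    rw [h.integral_eq_expect hf (hφ 1)]
    exact expect_le univ_nonempty fun i _ =>
      integral_mono (h.integrable_comp hf (hφ 1) i) (hφ ρ) (hφf i)
  have hae : φ ρ =ᵐ[μ] φ 1 := (integral_eq_iff_of_ae_le (hφ ρ) (hφ 1) (.of_forall hφρ)).1 <|
    (integral_mono (hφ ρ) (hφ 1) hφρ).antisymm hint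
  filter_upwards [hae] with x hx
  have hexcess : ρ * excess x = 1 * excess x := Real.arctan_injective hx
  have hzero : excess x = 0 := by nlinarith
  exact sub_nonpos.1 (max_eq_right_iff.1 hzero)

end IsSelfSimilar

/-- The similarity of ratio `ρ` which maps `c` to `c + w`. Written in this form, the sets of
maps with a common ratio and `∑ i, w i = 0` are those whose invariant measure has mean `c`. -/
def similarity {E : Type*} [AddCommGroup E] [Module ℝ E] (c : E) (ρ : ℝ) (w x : E) : E :=
  c + (ρ • (x - c) + w)

section Similarity

variable {E : Type*}

@[simp]
theorem similarity_sub_center [AddCommGroup E] [Module ℝ E] (c : E) (ρ : ℝ) (w x : E) :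
    similarity c ρ w x - c = ρ • (x - c) + w :=
  add_sub_cancel_left _ _

theorem dist_similarity_center_le [NormedAddCommGroup E] [NormedSpace ℝ E] (c : E) {ρ : ℝ}
    (hρ : 0 ≤ ρ) (w x : E) : dist (similarity c ρ w x) c ≤ ρ * dist x c + ‖w‖ := by
  rw [dist_eq_norm, dist_eq_norm, similarity_sub_center]
  exact (norm_add_le _ _).trans_eq (by rw [norm_smul_of_nonneg hρ])

theorem continuous_similarity [NormedAddCommGroup E] [NormedSpace ℝ E] (c : E) (ρ : ℝ) (w : E) :
    Continuous (similarity c ρ w) :=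
  continuous_const.add <| ((continuous_id.sub continuous_const).const_smul ρ).add continuous_const

theorem measurable_similarity [NormedAddCommGroup E] [NormedSpace ℝ E] [MeasurableSpace E]
    [BorelSpace E] (c : E) (ρ : ℝ) (w : E) : Measurable (similarity c ρ w) :=
  (continuous_similarity c ρ w).measurable

end Similarity

namespace IsSelfSimilar

section Support

variable {ι E : Type*} [Fintype ι] [Nonempty ι] [NormedAddCommGroup E] [NormedSpace ℝ E]
  [MeasurableSpace E] [BorelSpace E] {μ : Measure E} [IsFiniteMeasure μ]
  {c : E} {ρ : ℝ} {w : ι → E}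

theorem ae_norm_sub_center_le (h : IsSelfSimilar μ fun i => similarity c ρ (w i)) (hρ0 : 0 ≤ ρ)
    (hρ1 : ρ < 1) {R : ℝ} (hw : ∀ i, ‖w i‖ ≤ (1 - ρ) * R) : ∀ᵐ x ∂μ, ‖x - c‖ ≤ R := by
  simp_rw [← dist_eq_norm]
  refine h.ae_dist_le (fun i => measurable_similarity c ρ (w i)) hρ0 hρ1 fun i x => ?_
  exact (dist_similarity_center_le c hρ0 (w i) x).trans (by gcongr; exact hw i)

theorem memLp_of_continuous [ProperSpace E] {F : Type*} [NormedAddCommGroup F]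
    (h : IsSelfSimilar μ fun i => similarity c ρ (w i)) (hρ0 : 0 ≤ ρ) (hρ1 : ρ < 1) {g : E → F}
    (hg : Continuous g) (p : ℝ≥0∞) : MemLp g p μ := by
  have hw (i : ι) : ‖w i‖ ≤ (1 - ρ) * ((∑ j, ‖w j‖) / (1 - ρ)) := by
    rw [mul_div_cancel₀ _ (sub_pos.2 hρ1).ne']
    exact single_le_sum (fun j _ => norm_nonneg (w j)) (mem_univ i)
  refine memLp_of_ae_mem_isCompact (isCompact_closedBall c ((∑ j, ‖w j‖) / (1 - ρ))) ?_ hg p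
  filter_upwards [h.ae_norm_sub_center_le hρ0 hρ1 hw] with x hx
  exact mem_closedBall_iff_norm.2 hx

theorem integrable_of_continuous [ProperSpace E] {F : Type*} [NormedAddCommGroup F]
    (h : IsSelfSimilar μ fun i => similarity c ρ (w i)) (hρ0 : 0 ≤ ρ) (hρ1 : ρ < 1) {g : E → F}
    (hg : Continuous g) : Integrable g μ :=
  memLp_one_iff_integrable.1 (h.memLp_of_continuous hρ0 hρ1 hg 1)

theorem integral_eq_expect_similarity [ProperSpace E]
    (h : IsSelfSimilar μ fun i => similarity c ρ (w i)) (hρ0 : 0 ≤ ρ) (hρ1 : ρ < 1) {g : E → ℝ}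
    (hg : Continuous g) : ∫ x, g x ∂μ = 𝔼 i, ∫ x, g (similarity c ρ (w i) x) ∂μ :=
  h.integral_eq_expect (fun i => measurable_similarity c ρ (w i))
    (h.integrable_of_continuous hρ0 hρ1 hg)

end Support

section Moments

variable {ι E : Type*} [Fintype ι] [Nonempty ι] [NormedAddCommGroup E] [InnerProductSpace ℝ E]
  [MeasurableSpace E] [BorelSpace E] {μ : Measure E} [IsProbabilityMeasure μ]
  {c : E} {ρ : ℝ} {w : ι → E}

theorem ae_abs_mul_inner_le (h : IsSelfSimilar μ fun i => similarity c ρ (w i)) (hρ0 : 0 ≤ ρ)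
    (hρ1 : ρ < 1) {R : ℝ} (hR : ∀ i, ‖w i‖ ≤ (1 - ρ) * R) (v : E) :
    ∀ᵐ x ∂μ, |ρ * ⟪v, x - c⟫| ≤ ρ * (R * ‖v‖) := by
  filter_upwards [h.ae_norm_sub_center_le hρ0 hρ1 hR] with x hx
  rw [abs_mul, abs_of_nonneg hρ0, mul_comm R]
  gcongr
  exact (abs_real_inner_le_norm v _).trans (by gcongr)

variable [ProperSpace E]

theorem integral_sub_center_eq_zero (h : IsSelfSimilar μ fun i => similarity c ρ (w i))
    (hρ0 : 0 ≤ ρ) (hρ1 : ρ < 1) (hw : ∑ i, w i = 0) : ∫ x, (x - c) ∂μ = 0 := by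
  have hint : Integrable (fun x => x - c) μ := h.integrable_of_continuous hρ0 hρ1 (by fun_prop)
  refine ext_inner_left ℝ fun v => ?_
  have hstep : ∫ x, ⟪v, x - c⟫ ∂μ = ρ * ∫ x, ⟪v, x - c⟫ ∂μ := by
    conv_lhs => rw [h.integral_eq_expect_similarity hρ0 hρ1 (by fun_prop)]
    simp_rw [similarity_sub_center, inner_add_right, real_inner_smul_right,
      integral_add ((hint.const_inner v).const_mul ρ) (integrable_const _), integral_const_mul,
      integral_const, probReal_univ, one_smul, expect_add_distrib, Fintype.expect_const,
      expect_inner_eq_zero_of_sum_eq_zero hw, add_zero]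
  rw [inner_zero_right, ← integral_inner hint]
  nlinarith only [hstep, hρ1]

theorem integral_norm_smul_map_add_sq {F : Type*} [NormedAddCommGroup F] [InnerProductSpace ℝ F]
    [CompleteSpace F] (h : IsSelfSimilar μ fun i => similarity c ρ (w i)) (hρ0 : 0 ≤ ρ)
    (hρ1 : ρ < 1) (hw : ∑ i, w i = 0) (L : E →L[ℝ] F) (k : ℝ) (u : F) :
    ∫ x, ‖k • L (x - c) + u‖ ^ 2 ∂μ = k ^ 2 * ∫ x, ‖L (x - c)‖ ^ 2 ∂μ + ‖u‖ ^ 2 := by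
  have hmean : ∫ x, k • L (x - c) ∂μ = 0 := by
    rw [integral_smul, L.integral_comp_comm (h.integrable_of_continuous hρ0 hρ1 (by fun_prop)),
      h.integral_sub_center_eq_zero hρ0 hρ1 hw, map_zero, smul_zero]
  rw [integral_norm_add_sq_of_integral_eq_zero
    (h.memLp_of_continuous hρ0 hρ1 (by fun_prop) 2) hmean]
  simp_rw [norm_smul, mul_pow, Real.norm_eq_abs, sq_abs, integral_const_mul]

theorem integral_norm_map_sub_center_sq {F : Type*} [NormedAddCommGroup F] [InnerProductSpace ℝ F]
    [CompleteSpace F] (h : IsSelfSimilar μ fun i => similarity c ρ (w i)) (hρ0 : 0 ≤ ρ)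
    (hρ1 : ρ < 1) (hw : ∑ i, w i = 0) (L : E →L[ℝ] F) :
    (1 - ρ ^ 2) * ∫ x, ‖L (x - c)‖ ^ 2 ∂μ = 𝔼 i, ‖L (w i)‖ ^ 2 := by
  have hinv := h.integral_eq_expect_similarity hρ0 hρ1
    (g := fun x => ‖L (x - c)‖ ^ 2) (by fun_prop)
  simp_rw [similarity_sub_center, map_add, map_smul, h.integral_norm_smul_map_add_sq hρ0 hρ1 hw L,
    expect_add_distrib, Fintype.expect_const] at hinv
  linarith

theorem integral_norm_sub_sq (h : IsSelfSimilar μ fun i => similarity c ρ (w i)) (hρ0 : 0 ≤ ρ)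
    (hρ1 : ρ < 1) (hw : ∑ i, w i = 0) (a : E) :
    ∫ x, ‖x - a‖ ^ 2 ∂μ = ∫ x, ‖x - c‖ ^ 2 ∂μ + ‖c - a‖ ^ 2 := by
  simpa using h.integral_norm_smul_map_add_sq hρ0 hρ1 hw (.id ℝ E) 1 (c - a)

theorem integral_norm_similarity_sub_sq (h : IsSelfSimilar μ fun i => similarity c ρ (w i))
    (hρ0 : 0 ≤ ρ) (hρ1 : ρ < 1) (hw : ∑ i, w i = 0) (u a : E) :
    ∫ x, ‖similarity c ρ u x - a‖ ^ 2 ∂μ = ρ ^ 2 * ∫ x, ‖x - c‖ ^ 2 ∂μ + ‖c + u - a‖ ^ 2 := by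
  have hsplit (x : E) : similarity c ρ u x - a = ρ • (x - c) + (c + u - a) := by
    rw [similarity]; abel
  simp_rw [hsplit]
  exact h.integral_norm_smul_map_add_sq hρ0 hρ1 hw (.id ℝ E) ρ (c + u - a)

theorem integral_min_norm_sub_sq_le (h : IsSelfSimilar μ fun i => similarity c ρ (w i))
    (hρ0 : 0 ≤ ρ) (hρ1 : ρ < 1) (hw : ∑ i, w i = 0) (a b : E) :
    ∫ x, min (‖x - a‖ ^ 2) (‖x - b‖ ^ 2) ∂μ
      ≤ ρ ^ 2 * ∫ x, ‖x - c‖ ^ 2 ∂μ + 𝔼 i, min (‖c + w i - a‖ ^ 2) (‖c + w i - b‖ ^ 2) := by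
  have hpiece (i : ι) :
      ∫ x, min (‖similarity c ρ (w i) x - a‖ ^ 2) (‖similarity c ρ (w i) x - b‖ ^ 2) ∂μ
        ≤ ρ ^ 2 * ∫ x, ‖x - c‖ ^ 2 ∂μ + min (‖c + w i - a‖ ^ 2) (‖c + w i - b‖ ^ 2) := by
    have hcont := continuous_similarity c ρ (w i)
    rw [← min_add_add_left, ← h.integral_norm_similarity_sub_sq hρ0 hρ1 hw,
      ← h.integral_norm_similarity_sub_sq hρ0 hρ1 hw]
    refine le_min (integral_mono ?_ ?_ fun x => min_le_left _ _)
      (integral_mono ?_ ?_ fun x => min_le_right _ _) <;>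
    exact h.integrable_of_continuous hρ0 hρ1 (by fun_prop)
  rw [h.integral_eq_expect_similarity hρ0 hρ1 (by fun_prop)]
  refine (expect_le_expect fun i _ => hpiece i).trans_eq ?_
  rw [expect_add_distrib, Fintype.expect_const]

theorem integral_mul_inner_eq_zero (h : IsSelfSimilar μ fun i => similarity c ρ (w i))
    (hρ0 : 0 ≤ ρ) (hρ1 : ρ < 1) (hw : ∑ i, w i = 0) (v : E) : ∫ x, ρ * ⟪v, x - c⟫ ∂μ = 0 := by
  rw [integral_const_mul, integral_inner (h.integrable_of_continuous hρ0 hρ1 (by fun_prop)),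
    h.integral_sub_center_eq_zero hρ0 hρ1 hw, inner_zero_right, mul_zero]

theorem integral_abs_mul_inner_le (h : IsSelfSimilar μ fun i => similarity c ρ (w i))
    (hρ0 : 0 ≤ ρ) (hρ1 : ρ < 1) (hw : ∑ i, w i = 0) {r : ℝ} (hr : 0 ≤ r) {v : E}
    (hv : ρ ^ 2 * 𝔼 i, ⟪v, w i⟫ ^ 2 ≤ (1 - ρ ^ 2) * r ^ 2) :
    ∫ x, |ρ * ⟪v, x - c⟫| ∂μ ≤ r := by
  refine (abs_le_of_sq_le_sq' ?_ hr).2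
  refine (sq_integral_abs_le_integral_sq
    (h.memLp_of_continuous hρ0 hρ1 (by fun_prop) 2)).trans ?_
  have hmoment := h.integral_norm_map_sub_center_sq hρ0 hρ1 hw (innerSL ℝ v)
  simp only [innerSL_apply_apply, Real.norm_eq_abs, sq_abs] at hmoment
  simp_rw [mul_pow, integral_const_mul]
  refine le_of_mul_le_mul_left ?_ (show 0 < 1 - ρ ^ 2 by nlinarith)
  linear_combination hv + ρ ^ 2 * hmoment

/- With `Y = ρ ⟪v, · - c⟫`, the `i`-th piece contributes `∫ |Y + (⟪v, w i⟫ - t)|`, which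
`exists_integral_abs_add_le` bounds by a function that is affine in `⟪v, w i⟫ - t`. -/
theorem sq_integral_abs_inner_sub_le (h : IsSelfSimilar μ fun i => similarity c ρ (w i))
    (hρ0 : 0 ≤ ρ) (hρ1 : ρ < 1) (hw : ∑ i, w i = 0) {R β : ℝ} (hR : ∀ i, ‖w i‖ ≤ (1 - ρ) * R)
    (hβ : (4 / 3 * (ρ * R)) ^ 2 ≤ β) (hβR : 4 * β ≤ (1 - ρ ^ 2) * R ^ 2) {v : E}
    (hv : 𝔼 i, ⟪v, w i⟫ ^ 2 = β * ‖v‖ ^ 2) (t : ℝ) :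
    (∫ x, |⟪v, x - c⟫ - t| ∂μ) ^ 2 ≤ t ^ 2 + β * ‖v‖ ^ 2 := by
  have hR0 : 0 ≤ R := nonneg_of_mul_nonneg_right
    ((norm_nonneg _).trans (hR (Classical.arbitrary ι))) (sub_pos.2 hρ1)
  have hβ0 : 0 ≤ β := (sq_nonneg _).trans hβ
  set r := ρ * (R * ‖v‖) with hr
  have hY1 : ∫ x, |ρ * ⟪v, x - c⟫| ∂μ ≤ r / 2 := by
    refine h.integral_abs_mul_inner_le hρ0 hρ1 hw (by positivity) ?_
    rw [hv]
    linear_combination (ρ ^ 2 * ‖v‖ ^ 2 / 4) * hβR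
  choose s hs hsle using fun i => exists_integral_abs_add_le
    (h.integrable_of_continuous hρ0 hρ1 (by fun_prop)) (h.integral_mul_inner_eq_zero hρ0 hρ1 hw v)
    (h.ae_abs_mul_inner_le hρ0 hρ1 hR v) hY1 (⟪v, w i⟫ - t)
  have hk : (2 * (2 / 3 * r)) ^ 2 ≤ 𝔼 i, ⟪v, w i⟫ ^ 2 := by
    rw [hv, hr]
    linear_combination ‖v‖ ^ 2 * hβ
  rw [← Real.le_sqrt (integral_nonneg fun _ => abs_nonneg _) (by positivity), ← hv]
  calc ∫ x, |⟪v, x - c⟫ - t| ∂μ = 𝔼 i, ∫ x, |ρ * ⟪v, x - c⟫ + (⟪v, w i⟫ - t)| ∂μ := by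
        rw [h.integral_eq_expect_similarity hρ0 hρ1 (by fun_prop)]
        simp_rw [similarity_sub_center, inner_add_right, real_inner_smul_right, add_sub_assoc]
    _ ≤ 𝔼 i, (s i * (⟪v, w i⟫ - t) + 2 / 3 * r * (1 - s i ^ 2)) :=
        expect_le_expect fun i _ => hsle i
    _ ≤ √(t ^ 2 + 𝔼 i, ⟪v, w i⟫ ^ 2) :=
        expect_mul_sub_add_le_sqrt (expect_inner_eq_zero_of_sum_eq_zero hw v) hs (by positivity)
          hk t

theorem integral_min_norm_sub_sq (h : IsSelfSimilar μ fun i => similarity c ρ (w i))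
    (hρ0 : 0 ≤ ρ) (hρ1 : ρ < 1) (hw : ∑ i, w i = 0) (a b : E) :
    ∫ x, min (‖x - a‖ ^ 2) (‖x - b‖ ^ 2) ∂μ = ∫ x, ‖x - c‖ ^ 2 ∂μ + ‖midpoint ℝ a b - c‖ ^ 2
      + ‖a - b‖ ^ 2 / 4 - ∫ x, |⟪a - b, x - c⟫ - ⟪a - b, midpoint ℝ a b - c⟫| ∂μ := by
  have hsq : Integrable (fun x => ‖x - midpoint ℝ a b‖ ^ 2) μ :=
    h.integrable_of_continuous hρ0 hρ1 (by fun_prop)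
  have habs : Integrable (fun x => |⟪a - b, x - c⟫ - ⟪a - b, midpoint ℝ a b - c⟫|) μ :=
    h.integrable_of_continuous hρ0 hρ1 (by fun_prop)
  have hsum : Integrable (fun x => ‖x - midpoint ℝ a b‖ ^ 2 + ‖a - b‖ ^ 2 / 4) μ :=
    hsq.add (integrable_const _)
  have hsplit (x : E) : min (‖x - a‖ ^ 2) (‖x - b‖ ^ 2) = ‖x - midpoint ℝ a b‖ ^ 2
      + ‖a - b‖ ^ 2 / 4 - |⟪a - b, x - c⟫ - ⟪a - b, midpoint ℝ a b - c⟫| := by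
    rw [min_norm_sub_sq, ← inner_sub_right, sub_sub_sub_cancel_right]
  simp_rw [hsplit]
  rw [integral_sub hsum habs, integral_add hsq (integrable_const _),
    h.integral_norm_sub_sq hρ0 hρ1 hw, norm_sub_rev c, integral_const, probReal_univ, one_smul]

theorem sub_le_integral_min_norm_sub_sq (h : IsSelfSimilar μ fun i => similarity c ρ (w i))
    (hρ0 : 0 ≤ ρ) (hρ1 : ρ < 1) (hw : ∑ i, w i = 0) {R β : ℝ} (hR : ∀ i, ‖w i‖ ≤ (1 - ρ) * R)
    (hβ : (4 / 3 * (ρ * R)) ^ 2 ≤ β) (hβR : 4 * β ≤ (1 - ρ ^ 2) * R ^ 2)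
    (hframe : ∀ v : E, 𝔼 i, ⟪v, w i⟫ ^ 2 = β * ‖v‖ ^ 2) (a b : E) :
    ∫ x, ‖x - c‖ ^ 2 ∂μ - β ≤ ∫ x, min (‖x - a‖ ^ 2) (‖x - b‖ ^ 2) ∂μ := by
  rw [h.integral_min_norm_sub_sq hρ0 hρ1 hw a b]
  set v := a - b
  set u := midpoint ℝ a b - c
  have hβ0 : 0 ≤ β := (sq_nonneg _).trans hβ
  have hfirst : (∫ x, |⟪v, x - c⟫ - ⟪v, u⟫| ∂μ) ^ 2 ≤ (‖u‖ ^ 2 + β) * ‖v‖ ^ 2 :=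
    calc (∫ x, |⟪v, x - c⟫ - ⟪v, u⟫| ∂μ) ^ 2 ≤ ⟪v, u⟫ ^ 2 + β * ‖v‖ ^ 2 :=
          h.sq_integral_abs_inner_sub_le hρ0 hρ1 hw hR hβ hβR (hframe v) _
      _ ≤ (‖v‖ * ‖u‖) ^ 2 + β * ‖v‖ ^ 2 := by
          gcongr ?_ + _
          exact sq_le_sq.2 ((abs_real_inner_le_norm v u).trans (le_abs_self _))
      _ = (‖u‖ ^ 2 + β) * ‖v‖ ^ 2 := by ring
  have hamgm : ∫ x, |⟪v, x - c⟫ - ⟪v, u⟫| ∂μ ≤ ‖u‖ ^ 2 + β + ‖v‖ ^ 2 / 4 := by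
    refine (abs_le_of_sq_le_sq' (hfirst.trans ?_) (by positivity)).2
    linear_combination sq_nonneg (‖u‖ ^ 2 + β - ‖v‖ ^ 2 / 4)
  linarith

end Moments

end IsSelfSimilar

section Quantization

variable {μ : Measure E2} {a b : E2}

theorem ncard_pair_le_two {α : Type*} (a b : α) : ({a, b} : Set α).ncard ≤ 2 := by
  simpa using Set.ncard_insert_le a {b}

theorem exists_subset_pair_of_ncard_le_two {α : Type*} [Nonempty α] {s : Set α} (hs : s.Finite)
    (hcard : s.ncard ≤ 2) : ∃ a b, s ⊆ {a, b} := by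
  rcases s.eq_empty_or_nonempty with rfl | ⟨a, ha⟩
  · exact ⟨Classical.arbitrary α, Classical.arbitrary α, Set.empty_subset _⟩
  · have hdiff : (s \ {a}).ncard ≤ 1 := by
      rw [Set.ncard_sdiff_singleton_of_mem ha]
      omega
    obtain ⟨b, hb⟩ := (Set.ncard_le_one_iff_subset_singleton hs.sdiff).1 hdiff
    exact ⟨a, b, Set.sdiff_singleton_subset_iff.1 hb⟩

theorem err_anti (μ : Measure E2) : Antitone (err μ) := fun _ _ h =>
  lintegral_mono fun _ => biInf_mono h

theorem err_pair (h : Integrable (fun x => min (‖x - a‖ ^ 2) (‖x - b‖ ^ 2)) μ) :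
    err μ {a, b} = ENNReal.ofReal (∫ x, min (‖x - a‖ ^ 2) (‖x - b‖ ^ 2) ∂μ) := by
  rw [ofReal_integral_eq_lintegral_ofReal h (.of_forall fun x => by positivity)]
  simp only [err, iInf_pair, ENNReal.ofReal_min]

theorem quantErr_two_le_err_pair (μ : Measure E2) (a b : E2) : quantErr μ 2 ≤ err μ {a, b} :=
  iInf₂_le _ ⟨Set.toFinite _, ncard_pair_le_two a b⟩

theorem le_quantErr_two {V : ℝ≥0∞} (hV : ∀ a b, V ≤ err μ {a, b}) : V ≤ quantErr μ 2 :=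
  le_iInf₂ fun _ hα =>
    have ⟨a, b, hab⟩ := exists_subset_pair_of_ncard_le_two hα.1 hα.2
    (hV a b).trans (err_anti μ hab)

theorem isOptimal_two_pair (h : err μ {a, b} ≤ quantErr μ 2) : IsOptimal μ 2 {a, b} :=
  ⟨Set.toFinite _, ncard_pair_le_two a b, h.antisymm (quantErr_two_le_err_pair μ a b)⟩

end Quantization

section RMeasure

theorem pt_add (a b a' b' : ℝ) : pt a b + pt a' b' = pt (a + a') (b + b') := by
  ext i; fin_cases i <;> simp [pt]

theorem pt_sub (a b a' b' : ℝ) : pt a b - pt a' b' = pt (a - a') (b - b') := by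
  ext i; fin_cases i <;> simp [pt]

theorem smul_pt (k a b : ℝ) : k • pt a b = pt (k * a) (k * b) := by
  ext i; fin_cases i <;> simp [pt]

theorem inner_pt (v : E2) (a b : ℝ) : ⟪v, pt a b⟫ = v 0 * a + v 1 * b := by
  simp [pt, PiLp.inner_apply, mul_comm]

/-- The centroid of the triangle `Tri`, which is the mean of the R-measure. -/
def triCentroid : E2 := pt (1 / 2) (√3 / 6)

/-- The displacement `Smap i triCentroid - triCentroid` of the centroid under the map `Smap i`. -/
def offset : Fin 3 → E2 := ![pt (-1 / 3) (-√3 / 9), pt (1 / 3) (-√3 / 9), pt 0 (2 * √3 / 9)]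

theorem one_div_six_mul_sqrt_three : 1 / (6 * √3) = √3 / 18 := by
  field_simp
  norm_num

theorem two_div_three_mul_sqrt_three : 2 / (3 * √3) = 2 * √3 / 9 := by
  field_simp
  norm_num

theorem pair_offset_zero :
    ({triCentroid + offset 0, triCentroid - (2⁻¹ : ℝ) • offset 0} : Set E2)
      = {pt (1 / 6) (1 / (6 * √3)), pt (2 / 3) (2 / (3 * √3))} := by
  rw [one_div_six_mul_sqrt_three, two_div_three_mul_sqrt_three]
  simp only [triCentroid, offset, Matrix.cons_val_zero, pt_add, pt_sub, smul_pt]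
  ring_nf

theorem pair_offset_one :
    ({triCentroid + offset 1, triCentroid - (2⁻¹ : ℝ) • offset 1} : Set E2)
      = {pt (5 / 6) (1 / (6 * √3)), pt (1 / 3) (2 / (3 * √3))} := by
  rw [one_div_six_mul_sqrt_three, two_div_three_mul_sqrt_three]
  simp only [triCentroid, offset, Matrix.cons_val_one, Matrix.cons_val_zero, pt_add, pt_sub,
    smul_pt]
  ring_nf

theorem Smap_eq_similarity (i : Fin 3) : Smap i = similarity triCentroid 3⁻¹ (offset i) := by
  ext x k
  fin_cases i <;> fin_cases k <;>
    simp [Smap, S1, S2, S3, similarity, triCentroid, offset, pt] <;> ring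

theorem isSelfSimilar_similarity_offset {P : Measure E2}
    (hP : P = (3 : ℝ≥0∞)⁻¹ • (P.map S1 + P.map S2 + P.map S3)) :
    IsSelfSimilar P fun i => similarity triCentroid 3⁻¹ (offset i) := by
  simp_rw [← Smap_eq_similarity]
  simpa [IsSelfSimilar, Fin.sum_univ_three, Smap] using hP

theorem sum_offset : ∑ i, offset i = 0 := by
  ext k
  fin_cases k <;> simp [offset, Fin.sum_univ_three, pt] <;> ring

theorem inner_offset (i j : Fin 3) : ⟪offset i, offset j⟫ = if i = j then 4 / 27 else -2 / 27 := by
  have h3 : √3 ^ 2 = 3 := Real.sq_sqrt (by norm_num)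
  fin_cases i <;> fin_cases j <;> refine (inner_pt _ _ _).trans ?_ <;> simp [offset, pt] <;>
    linarith

theorem norm_offset_sq (i : Fin 3) : ‖offset i‖ ^ 2 = 4 / 27 := by
  rw [← real_inner_self_eq_norm_sq, inner_offset, if_pos rfl]

theorem norm_offset_add_half_sq {i j : Fin 3} (h : j ≠ i) :
    ‖offset j + (2⁻¹ : ℝ) • offset i‖ ^ 2 = 1 / 9 := by
  rw [norm_add_sq_real, norm_smul, mul_pow, norm_offset_sq, norm_offset_sq, real_inner_smul_right,
    inner_offset, if_neg h]
  norm_num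

theorem expect_inner_offset_sq (v : E2) : 𝔼 i, ⟪v, offset i⟫ ^ 2 = 2 / 27 * ‖v‖ ^ 2 := by
  have h3 : √3 ^ 2 = 3 := Real.sq_sqrt (by norm_num)
  simp only [Fintype.expect_eq_sum_div_card, Fintype.card_fin, Fin.sum_univ_three,
    Fin.sum_univ_two, offset, Matrix.cons_val, inner_pt, EuclideanSpace.real_norm_sq_eq,
    Nat.cast_ofNat]
  linear_combination v 1 ^ 2 * (2 / 81) * h3

variable {P : Measure E2} [IsProbabilityMeasure P]

theorem integral_norm_sub_triCentroid_sq
    (h : IsSelfSimilar P fun i => similarity triCentroid 3⁻¹ (offset i)) :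
    ∫ x, ‖x - triCentroid‖ ^ 2 ∂P = 1 / 6 := by
  have hmoment := h.integral_norm_map_sub_center_sq (by norm_num) (by norm_num) sum_offset
    (.id ℝ E2)
  simp only [ContinuousLinearMap.id_apply, norm_offset_sq, Fintype.expect_const] at hmoment
  linarith

theorem integral_min_norm_sub_offset_sq_le
    (h : IsSelfSimilar P fun i => similarity triCentroid 3⁻¹ (offset i)) (i : Fin 3) :
    ∫ x, min (‖x - (triCentroid + offset i)‖ ^ 2) (‖x - (triCentroid - (2⁻¹ : ℝ) • offset i)‖ ^ 2)
      ∂P ≤ 5 / 54 := by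
  have hvertex (j : Fin 3) :
      min (‖triCentroid + offset j - (triCentroid + offset i)‖ ^ 2)
        (‖triCentroid + offset j - (triCentroid - (2⁻¹ : ℝ) • offset i)‖ ^ 2)
        ≤ if j = i then 0 else 1 / 9 := by
    split_ifs with hji
    · exact min_le_of_left_le (by simp [hji])
    · refine min_le_of_right_le (le_of_eq ?_)
      rw [← norm_offset_add_half_sq hji]
      congr 2
      abel
  have hmean : 𝔼 j, (if j = i then (0 : ℝ) else 1 / 9) = 2 / 27 := by
    fin_cases i <;> simp [Fintype.expect_eq_sum_div_card, Fin.sum_univ_three] <;> norm_num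
  refine (h.integral_min_norm_sub_sq_le (by norm_num) (by norm_num) sum_offset _ _).trans ?_
  rw [integral_norm_sub_triCentroid_sq h]
  linarith [expect_le_expect (s := univ) fun j _ => hvertex j]

theorem le_integral_min_norm_sub_sq
    (h : IsSelfSimilar P fun i => similarity triCentroid 3⁻¹ (offset i)) (a b : E2) :
    5 / 54 ≤ ∫ x, min (‖x - a‖ ^ 2) (‖x - b‖ ^ 2) ∂P := by
  have h3 : √3 ^ 2 = 3 := Real.sq_sqrt (by norm_num)
  have hoffset (i : Fin 3) : ‖offset i‖ ≤ (1 - 3⁻¹) * (√3 / 3) := by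
    refine (abs_le_of_sq_le_sq' ?_ (by positivity)).2
    rw [norm_offset_sq]
    linarith
  have hlower := h.sub_le_integral_min_norm_sub_sq (by norm_num) (by norm_num) sum_offset hoffset
    (by linarith) (by linarith) expect_inner_offset_sq a b
  rw [integral_norm_sub_triCentroid_sq h] at hlower
  linarith

theorem err_pair_eq_ofReal (h : IsSelfSimilar P fun i => similarity triCentroid 3⁻¹ (offset i))
    (a b : E2) :
    err P {a, b} = ENNReal.ofReal (∫ x, min (‖x - a‖ ^ 2) (‖x - b‖ ^ 2) ∂P) :=
  err_pair (h.integrable_of_continuous (by norm_num) (by norm_num) (by fun_prop))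

theorem quantErr_two_eq (h : IsSelfSimilar P fun i => similarity triCentroid 3⁻¹ (offset i)) :
    quantErr P 2 = ENNReal.ofReal (5 / 54) := by
  refine le_antisymm ?_ (le_quantErr_two fun a b => ?_)
  · refine (quantErr_two_le_err_pair P (triCentroid + offset 0)
      (triCentroid - (2⁻¹ : ℝ) • offset 0)).trans ?_
    rw [err_pair_eq_ofReal h]
    exact ENNReal.ofReal_le_ofReal (integral_min_norm_sub_offset_sq_le h 0)
  · rw [err_pair_eq_ofReal h]
    exact ENNReal.ofReal_le_ofReal (le_integral_min_norm_sub_sq h a b)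

theorem isOptimal_two_offset (h : IsSelfSimilar P fun i => similarity triCentroid 3⁻¹ (offset i))
    (i : Fin 3) :
    IsOptimal P 2 {triCentroid + offset i, triCentroid - (2⁻¹ : ℝ) • offset i} := by
  refine isOptimal_two_pair ?_
  rw [quantErr_two_eq h, err_pair_eq_ofReal h]
  exact ENNReal.ofReal_le_ofReal (integral_min_norm_sub_offset_sq_le h i)

end RMeasure

end

/-- The sets {(1/6, 1/(6√3)), (2/3, 2/(3√3))} and {(5/6, 1/(6√3)), (1/3, 2/(3√3))} are each
optimal sets of two-means for the R-measure P, with quantization error V₂(P) = 5/54. -/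
theorem stmt_5 (P : Measure E2) [IsProbabilityMeasure P]
    (hP : P = (3 : ℝ≥0∞)⁻¹ • (P.map S1 + P.map S2 + P.map S3)) :
    IsOptimal P 2 {pt (1/6) (1 / (6 * Real.sqrt 3)), pt (2/3) (2 / (3 * Real.sqrt 3))}
      ∧ IsOptimal P 2 {pt (5/6) (1 / (6 * Real.sqrt 3)), pt (1/3) (2 / (3 * Real.sqrt 3))}
      ∧ quantErr P 2 = 5 / 54 := by
  have h := isSelfSimilar_similarity_offset hP
  refine ⟨?_, ?_, ?_⟩
  · exact pair_offset_zero ▸ isOptimal_two_offset h 0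
  · exact pair_offset_one ▸ isOptimal_two_offset h 1
  · rw [quantErr_two_eq h]
    norm_num [ENNReal.ofReal_div_of_pos]

end
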